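/- arXiv:2004.09333 — 2 statements merged into one kernel-verified Lean document; each statement's English description precedes it below -/
import Mathlib

section
/- Let (E, 𝓕, μ) be a probability space, (𝒳_i)_{i≥0} measurable spaces, X_i : E → 𝒳_i measurable, 𝒴_n = ∏_{j≥n} 𝒳_j and X̄_n(x) = (X_n(x), X_{n+1}(x), ...). Let (δ_n) be nonnegative reals with δ_n → 0, and let r : E → [0,∞) be measurable with ∫ r dμ = 1 satisfying the decorrelation property with constant K ≥ 0 relative to (δ_n): for every n ≥ 0 and every bounded measurable f : 𝒴_n → ℂ, |∫ r·(f∘X̄_n) dμ − ∫ f∘X̄_n dμ| ≤ K·(sup|f|)·δ_n. Let g_j : 𝒴_j → ℝ^d be measurable, S_n = Σ_{j=0}^{n-1} g_j∘X̄_j, and assume ∫|S_n| dμ < ∞ and ∫ r·|S_n| dμ < ∞ for every n (|·| the Euclidean norm). Let ν be the probability measure dν = r dμ and let (b_n) be positive reals with b_n → ∞. Then the laws of S_n/b_n under μ converge weakly to some probability measure on ℝ^d as n → ∞ if and only if the laws of S_n/b_n under ν converge weakly, and in that case the two limits coincide. -/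
open MeasureTheory Filter Topology Complex
open scoped BigOperators ENNReal RealInnerProductSpace

/-- `X̄ₙ(x) = (Xₙ(x), Xₙ₊₁(x), ...)`. -/
def Xbar {E : Type*} {𝒳 : ℕ → Type*} (X : ∀ i, E → 𝒳 i) (n : ℕ) (x : E) :
    ∀ j, 𝒳 (n + j) := fun j => X (n + j) x

/-- The decorrelation property with constant `K` relative to the rates `δ`: for every `n`
and every bounded measurable `f : 𝒴ₙ → ℂ`,
`|∫ s·(f∘X̄ₙ) dμ − ∫ s dμ · ∫ f∘X̄ₙ dμ| ≤ K · sup|f| · δₙ`. -/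
def Decorrelates {E : Type*} [MeasurableSpace E] (μ : Measure E) {𝒳 : ℕ → Type*}
    [∀ i, MeasurableSpace (𝒳 i)] (X : ∀ i, E → 𝒳 i) (s : E → ℝ) (K : ℝ) (δ : ℕ → ℝ) : Prop :=
  ∀ (n : ℕ) (f : (∀ j, 𝒳 (n + j)) → ℂ) (C : ℝ), Measurable f → (∀ y, ‖f y‖ ≤ C) →
    ‖(∫ x, (s x : ℂ) * f (Xbar X n x) ∂μ) -
        ((∫ x, s x ∂μ : ℝ) : ℂ) * ∫ x, f (Xbar X n x) ∂μ‖ ≤ K * C * δ n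

/-- Convergence in distribution (weak convergence of laws) of `Wₙ` under `μ` towards `P`. -/
def TendstoInDistribution {E G : Type*} [MeasurableSpace E] [TopologicalSpace G] [MeasurableSpace G]
    (μ : Measure E) (W : ℕ → E → G) (P : Measure G) : Prop :=
  ∀ h : BoundedContinuousFunction G ℝ,
    Tendsto (fun n => ∫ x, h (W n x) ∂μ) atTop (𝓝 (∫ y, h y ∂P))

/-!
On the σ-algebra generated by `(Xₘ, Xₘ₊₁, ...)` the measures `μ` and `ν = r dμ` differ by at most
`K δₘ` on functions bounded by `1`. Dropping the first `m` terms of `Sₙ` changes `Sₙ / bₙ` by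
`Sₘ / bₙ → 0` and makes it measurable for that σ-algebra. By dominated convergence, for `f` bounded
and uniformly continuous, `|∫ f(Sₙ / bₙ) dν - ∫ f(Sₙ / bₙ) dμ|` thus has limsup at most `K ‖f‖ δₘ`,
for every `m`. Bounded Lipschitz functions being enough to test weak convergence, the two sequences
of laws have the same limits.
-/

open scoped BoundedContinuousFunction

section ConvergenceInDistribution

variable {E G : Type*} [MeasurableSpace E] [MeasurableSpace G]

theorem tendstoInDistribution_iff_forall_lipschitz [PseudoEMetricSpace G] [OpensMeasurableSpace G]
    {μ : Measure E} [IsProbabilityMeasure μ] {P : Measure G} [IsProbabilityMeasure P]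
    {W : ℕ → E → G} (hW : ∀ n, AEMeasurable (W n) μ) :
    TendstoInDistribution μ W P ↔ ∀ f : G →ᵇ ℝ, (∃ L, LipschitzWith L f) →
      Tendsto (fun n => ∫ x, f (W n x) ∂μ) atTop (𝓝 (∫ y, f y ∂P)) := by
  refine ⟨fun h f _ => h f, fun h => ?_⟩
  let law (n : ℕ) : ProbabilityMeasure G :=
    ⟨μ.map (W n), Measure.isProbabilityMeasure_map (hW n)⟩
  have integral_law (n : ℕ) (f : G →ᵇ ℝ) : ∫ y, f y ∂(law n : Measure G) = ∫ x, f (W n x) ∂μ :=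
    integral_map (hW n) f.continuous.measurable.aestronglyMeasurable
  have law_tendsto : Tendsto law atTop (𝓝 ⟨P, inferInstance⟩) := by
    refine tendsto_iff_forall_lipschitz_integral_tendsto.2 ?_
    rintro f ⟨C, hC⟩ ⟨L, hL⟩
    let F : G →ᵇ ℝ := ⟨⟨f, hL.continuous⟩, ⟨C, hC⟩⟩
    exact (h F ⟨L, hL⟩).congr fun n => (integral_law n F).symm
  intro f
  exact (ProbabilityMeasure.tendsto_iff_forall_integral_tendsto.1 law_tendsto f).congr
    fun n => integral_law n f

theorem eq_of_tendstoInDistribution [TopologicalSpace G] [HasOuterApproxClosed G] [BorelSpace G]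
    {μ : Measure E} {W : ℕ → E → G} {P Q : Measure G} [IsFiniteMeasure P] [IsFiniteMeasure Q]
    (hP : TendstoInDistribution μ W P) (hQ : TendstoInDistribution μ W Q) : P = Q :=
  ext_of_forall_integral_eq_of_IsFiniteMeasure fun f => tendsto_nhds_unique (hP f) (hQ f)

theorem tendsto_integral_comp_sub_integral_comp [PseudoMetricSpace G] [OpensMeasurableSpace G]
    {μ : Measure E} [IsFiniteMeasure μ] {V W : ℕ → E → G}
    (hV : ∀ n, AEMeasurable (V n) μ) (hW : ∀ n, AEMeasurable (W n) μ)
    (hWV : ∀ᵐ x ∂μ, Tendsto (fun n => dist (W n x) (V n x)) atTop (𝓝 0))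
    {f : G →ᵇ ℝ} (hf : UniformContinuous f) :
    Tendsto (fun n => ∫ x, f (W n x) ∂μ - ∫ x, f (V n x) ∂μ) atTop (𝓝 0) := by
  have aesm {U : E → G} (hU : AEMeasurable U μ) : AEStronglyMeasurable (fun x => f (U x)) μ :=
    (f.continuous.measurable.comp_aemeasurable hU).aestronglyMeasurable
  have integrable {U : E → G} (hU : AEMeasurable U μ) : Integrable (fun x => f (U x)) μ :=
    .of_bound (aesm hU) ‖f‖ (ae_of_all _ fun x => f.norm_coe_le_norm _)
  have pointwise : ∀ᵐ x ∂μ, Tendsto (fun n => f (W n x) - f (V n x)) atTop (𝓝 0) := by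
    filter_upwards [hWV] with x hx
    have pairs_close : Tendsto (fun n => (W n x, V n x)) atTop (uniformity G) :=
      tendsto_uniformity_iff_dist_tendsto_zero.2 hx
    exact (tendsto_zero_iff_abs_tendsto_zero _).2
      (tendsto_uniformity_iff_dist_tendsto_zero.1 (Tendsto.comp hf pairs_close))
  have dominated := tendsto_integral_of_dominated_convergence (fun _ => ‖f‖ + ‖f‖)
    (fun n => (aesm (hW n)).sub (aesm (hV n))) (integrable_const _)
    (fun n => ae_of_all _ fun x => norm_sub_le_of_le (f.norm_coe_le_norm _) (f.norm_coe_le_norm _))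
    pointwise
  simpa only [integral_zero, integral_sub' (integrable (hW _)) (integrable (hV _))] using dominated

end ConvergenceInDistribution

section Density

variable {E : Type*} [MeasurableSpace E] {μ : Measure E} {r : E → ℝ}

theorem isProbabilityMeasure_withDensity_ofReal (hr0 : 0 ≤ᵐ[μ] r) (hr1 : ∫ x, r x ∂μ = 1) :
    IsProbabilityMeasure (μ.withDensity fun x => ENNReal.ofReal (r x)) where
  measure_univ := by
    rw [withDensity_apply _ MeasurableSet.univ, Measure.restrict_univ,
      ← ofReal_integral_eq_lintegral_ofReal (integrable_of_integral_eq_one hr1) hr0, hr1,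
      ENNReal.ofReal_one]

theorem integral_withDensity_ofReal {F : Type*} [NormedAddCommGroup F] [NormedSpace ℝ F]
    (hr : AEMeasurable r μ) (hr0 : 0 ≤ᵐ[μ] r) (φ : E → F) :
    ∫ x, φ x ∂μ.withDensity (fun x => ENNReal.ofReal (r x)) = ∫ x, r x • φ x ∂μ := by
  rw [integral_withDensity_eq_integral_toReal_smul₀ hr.ennreal_ofReal
    (ae_of_all _ fun _ => ENNReal.ofReal_lt_top)]
  refine integral_congr_ae ?_
  filter_upwards [hr0] with x hx
  rw [ENNReal.toReal_ofReal hx]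

end Density

section Tail

variable {E : Type*} {𝒳 : ℕ → Type*} [∀ i, MeasurableSpace (𝒳 i)] {X : ∀ i, E → 𝒳 i}

/-- The σ-algebra on `E` generated by `Xₘ, Xₘ₊₁, ...` (and not the intersection over `m`). Working
with it instead of with functions on `∏_{j ≥ m} 𝒳 j` avoids casts between `𝒳 (m + i + j)` and
`𝒳 (m + (i + j))`. -/
abbrev tailSigmaAlgebra (X : ∀ i, E → 𝒳 i) (m : ℕ) : MeasurableSpace E :=
  MeasurableSpace.comap (Xbar X m) inferInstance

theorem measurable_Xbar [MeasurableSpace E] (hX : ∀ i, Measurable (X i)) (m : ℕ) :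
    Measurable (Xbar X m) :=
  measurable_pi_lambda _ fun i => hX (m + i)

theorem measurable_tailSigmaAlgebra_Xbar {m j : ℕ} (hmj : m ≤ j) :
    Measurable[tailSigmaAlgebra X m] (Xbar X j) := by
  have coordinate {k : ℕ} (hmk : m ≤ k) : Measurable[tailSigmaAlgebra X m] (X k) := by
    obtain ⟨i, rfl⟩ := Nat.exists_eq_add_of_le hmk
    exact (measurable_pi_apply i).comp (comap_measurable (Xbar X m))
  let : MeasurableSpace E := tailSigmaAlgebra X m
  exact measurable_pi_lambda _ fun i => coordinate (hmj.trans (j.le_add_right i))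

variable [MeasurableSpace E] {μ : Measure E} {r : E → ℝ} {K : ℝ} {δ : ℕ → ℝ}

theorem Decorrelates.abs_integral_mul_sub_le (h : Decorrelates μ X r K δ) {m : ℕ} {φ : E → ℝ}
    (hφ : Measurable[tailSigmaAlgebra X m] φ) {C : ℝ} (hC0 : 0 ≤ C) (hC : ∀ x, |φ x| ≤ C) :
    |∫ x, r x * φ x ∂μ - (∫ x, r x ∂μ) * ∫ x, φ x ∂μ| ≤ K * C * δ m := by
  obtain ⟨ψ, hψ, rfl⟩ := hφ.exists_eq_measurable_comp
  -- `ψ` is only known to be bounded on the range of `Xbar X m`, hence the truncation.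
  let ψ' : (∀ j, 𝒳 (m + j)) → ℝ := fun y => max (-C) (min C (ψ y))
  have hψ' (y) : ‖(ψ' y : ℂ)‖ ≤ C := by
    rw [Complex.norm_real, Real.norm_eq_abs, abs_le]
    exact ⟨le_max_left _ _, max_le (neg_le_self hC0) (min_le_left _ _)⟩
  have hψψ' (x) : ψ' (Xbar X m x) = ψ (Xbar X m x) := by
    obtain ⟨hl, hu⟩ := abs_le.1 (hC x)
    exact (congrArg _ (min_eq_right hu)).trans (max_eq_right hl)
  have := h m (fun y => ψ' y) C
    (Complex.measurable_ofReal.comp (measurable_const.max (measurable_const.min hψ))) hψ'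
  simpa only [Function.comp_apply, hψψ', ← Complex.ofReal_mul, integral_complex_ofReal,
    ← Complex.ofReal_sub, Complex.norm_real, Real.norm_eq_abs] using this

theorem Decorrelates.abs_integral_withDensity_sub_le (h : Decorrelates μ X r K δ)
    (hr0 : 0 ≤ᵐ[μ] r) (hr1 : ∫ x, r x ∂μ = 1) {m : ℕ} {φ : E → ℝ}
    (hφ : Measurable[tailSigmaAlgebra X m] φ) {C : ℝ} (hC0 : 0 ≤ C) (hC : ∀ x, |φ x| ≤ C) :
    |∫ x, φ x ∂μ.withDensity (fun x => ENNReal.ofReal (r x)) - ∫ x, φ x ∂μ| ≤ K * C * δ m := by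
  have hr : AEMeasurable r μ := (integrable_of_integral_eq_one hr1).aemeasurable
  simpa only [integral_withDensity_ofReal hr hr0, smul_eq_mul, hr1, one_mul] using
    h.abs_integral_mul_sub_le hφ hC0 hC

end Tail

section AsymptoticallyTail

variable {E G : Type*} [MeasurableSpace E] [MeasurableSpace G]
  {𝒳 : ℕ → Type*} [∀ i, MeasurableSpace (𝒳 i)]

/-- A sequence `W` of random variables is asymptotically tail if, for each `m`, it is almost surely
asymptotic to a sequence that depends on `Xₘ, Xₘ₊₁, ...` only. -/
def IsAsymptoticallyTail [PseudoMetricSpace G] (μ : Measure E) (X : ∀ i, E → 𝒳 i)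
    (W : ℕ → E → G) : Prop :=
  ∀ m, ∃ V : ℕ → E → G, (∀ n, Measurable[tailSigmaAlgebra X m] (V n)) ∧
    ∀ᵐ x ∂μ, Tendsto (fun n => dist (W n x) (V n x)) atTop (𝓝 0)

theorem isAsymptoticallyTail_smul_sum {𝕜 : Type*} [NormedField 𝕜] [SeminormedAddCommGroup G]
    [NormedSpace 𝕜 G] [BorelSpace G] [SecondCountableTopology G] (μ : Measure E)
    (X : ∀ i, E → 𝒳 i) {g : ∀ j, (∀ i, 𝒳 (j + i)) → G} (hg : ∀ j, Measurable (g j))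
    {a : ℕ → 𝕜} (ha : Tendsto a atTop (𝓝 0)) :
    IsAsymptoticallyTail μ X fun n x => a n • ∑ j ∈ Finset.range n, g j (Xbar X j x) := by
  intro m
  refine ⟨fun n x => a n • ∑ j ∈ Finset.Ico m n, g j (Xbar X j x), fun n => ?_,
    ae_of_all _ fun x => ?_⟩
  · refine Measurable.const_smul (Finset.measurable_sum _ fun j hj => ?_) (a n)
    exact (hg j).comp (measurable_tailSigmaAlgebra_Xbar (Finset.mem_Ico.1 hj).1)
  · have head_tendsto : Tendsto (fun n => ‖a n • ∑ j ∈ Finset.range m, g j (Xbar X j x)‖) atTop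
        (𝓝 0) := by
      simpa only [zero_smul, norm_zero] using
        (ha.smul_const (∑ j ∈ Finset.range m, g j (Xbar X j x))).norm
    refine head_tendsto.congr' ?_
    filter_upwards [eventually_ge_atTop m] with n hmn
    rw [dist_eq_norm, ← smul_sub, Finset.sum_Ico_eq_sub _ hmn, sub_sub_cancel]

variable [PseudoMetricSpace G] {μ : Measure E}
  {X : ∀ i, E → 𝒳 i} {r : E → ℝ} {K : ℝ} {δ : ℕ → ℝ} {W : ℕ → E → G}

theorem IsAsymptoticallyTail.tendsto_integral_withDensity_sub [OpensMeasurableSpace G]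
    [IsFiniteMeasure μ] (hWX : IsAsymptoticallyTail μ X W)
    (hX : ∀ i, Measurable (X i)) (hW : ∀ n, AEMeasurable (W n) μ)
    (hδ : Tendsto δ atTop (𝓝 0)) (hr0 : 0 ≤ᵐ[μ] r)
    (hr1 : ∫ x, r x ∂μ = 1) (hdec : Decorrelates μ X r K δ)
    {f : G →ᵇ ℝ} (hf : UniformContinuous f) :
    Tendsto (fun n => ∫ x, f (W n x) ∂μ.withDensity (fun x => ENNReal.ofReal (r x)) -
      ∫ x, f (W n x) ∂μ) atTop (𝓝 0) := by
  have := isProbabilityMeasure_withDensity_ofReal hr0 hr1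
  set ν := μ.withDensity fun x => ENNReal.ofReal (r x)
  have hνμ : ν ≪ μ := withDensity_absolutelyContinuous μ _
  rw [Metric.tendsto_nhds]
  intro ε hε
  obtain ⟨m, hm⟩ : ∃ m, K * ‖f‖ * δ m < ε / 2 := by
    have : Tendsto (fun m => K * ‖f‖ * δ m) atTop (𝓝 0) := by
      simpa only [mul_zero] using hδ.const_mul (K * ‖f‖)
    exact (this.eventually_lt_const (half_pos hε)).exists
  obtain ⟨V, hVtail, hWV⟩ := hWX m
  have hV (n : ℕ) : Measurable (V n) := (hVtail n).mono (measurable_Xbar hX m).comap_le le_rfl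
  have decorrelated (n : ℕ) : |∫ x, f (V n x) ∂ν - ∫ x, f (V n x) ∂μ| ≤ K * ‖f‖ * δ m :=
    hdec.abs_integral_withDensity_sub_le hr0 hr1 (f.continuous.measurable.comp (hVtail n))
      (norm_nonneg f) fun x => f.norm_coe_le_norm _
  have replaced := (tendsto_integral_comp_sub_integral_comp (fun n => (hV n).aemeasurable)
      (fun n => (hW n).mono_ac hνμ) (hνμ.ae_le hWV) hf).sub
    (tendsto_integral_comp_sub_integral_comp (fun n => (hV n).aemeasurable) hW hWV hf)
  rw [sub_zero] at replaced
  filter_upwards [Metric.tendsto_nhds.1 replaced _ (half_pos hε)] with n hn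
  rw [Real.dist_0_eq_abs] at hn ⊢
  have := abs_le.1 (decorrelated n)
  rw [abs_lt] at hn ⊢
  constructor <;> linarith

theorem IsAsymptoticallyTail.tendstoInDistribution_withDensity_iff [OpensMeasurableSpace G]
    [IsProbabilityMeasure μ] (hWX : IsAsymptoticallyTail μ X W) (hX : ∀ i, Measurable (X i))
    (hW : ∀ n, AEMeasurable (W n) μ) (hδ : Tendsto δ atTop (𝓝 0)) (hr0 : 0 ≤ᵐ[μ] r)
    (hr1 : ∫ x, r x ∂μ = 1) (hdec : Decorrelates μ X r K δ)
    (P : Measure G) [IsProbabilityMeasure P] :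
    TendstoInDistribution (μ.withDensity fun x => ENNReal.ofReal (r x)) W P ↔
      TendstoInDistribution μ W P := by
  have := isProbabilityMeasure_withDensity_ofReal hr0 hr1
  have hWν (n : ℕ) := (hW n).mono_ac
    (withDensity_absolutelyContinuous μ fun x => ENNReal.ofReal (r x))
  rw [tendstoInDistribution_iff_forall_lipschitz hWν, tendstoInDistribution_iff_forall_lipschitz hW]
  refine forall₂_congr fun f hf => ?_
  obtain ⟨L, hL⟩ := hf
  exact tendsto_iff_of_dist <| (tendsto_zero_iff_abs_tendsto_zero _).1 <|
    hWX.tendsto_integral_withDensity_sub hX hW hδ hr0 hr1 hdec hL.uniformContinuous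

end AsymptoticallyTail

theorem eagleson_nonstationary_general
    {E : Type*} [MeasurableSpace E] (μ : Measure E) [IsProbabilityMeasure μ]
    {𝒳 : ℕ → Type*} [∀ i, MeasurableSpace (𝒳 i)]
    (X : ∀ i, E → 𝒳 i) (hX : ∀ i, Measurable (X i))
    (δ : ℕ → ℝ) (hδ : Tendsto δ atTop (𝓝 0))
    (r : E → ℝ) (hr0 : 0 ≤ᵐ[μ] r) (hr1 : ∫ x, r x ∂μ = 1)
    (K : ℝ) (hdec : Decorrelates μ X r K δ)
    {G : Type*} [SeminormedAddCommGroup G] [NormedSpace ℝ G] [SecondCountableTopology G]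
    [MeasurableSpace G] [BorelSpace G]
    (g : ∀ j, (∀ i, 𝒳 (j + i)) → G) (hg : ∀ j, Measurable (g j))
    (S : ℕ → E → G) (hS : ∀ n x, S n x = ∑ j ∈ Finset.range n, g j (Xbar X j x))
    (b : ℕ → ℝ) (hb : Tendsto b atTop atTop)
    (ν : Measure E) (hν : ν = μ.withDensity (fun x => ENNReal.ofReal (r x))) :
    ((∃ P : Measure G, IsProbabilityMeasure P ∧
        TendstoInDistribution μ (fun n x => (b n)⁻¹ • S n x) P) ↔
      (∃ P : Measure G, IsProbabilityMeasure P ∧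
        TendstoInDistribution ν (fun n x => (b n)⁻¹ • S n x) P)) ∧
    (∀ P Q : Measure G, IsProbabilityMeasure P → IsProbabilityMeasure Q →
      TendstoInDistribution μ (fun n x => (b n)⁻¹ • S n x) P →
      TendstoInDistribution ν (fun n x => (b n)⁻¹ • S n x) Q → P = Q) := by
  obtain rfl : S = fun n x => ∑ j ∈ Finset.range n, g j (Xbar X j x) := funext₂ hS
  subst hν
  have hW (n : ℕ) : Measurable fun x => (b n)⁻¹ • ∑ j ∈ Finset.range n, g j (Xbar X j x) :=
    (Finset.measurable_sum _ fun j _ => (hg j).comp (measurable_Xbar hX j)).const_smul _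
  have tail := isAsymptoticallyTail_smul_sum μ X hg (tendsto_inv_atTop_zero.comp hb)
  have same_limits (P : Measure G) [IsProbabilityMeasure P] :=
    tail.tendstoInDistribution_withDensity_iff hX (fun n => (hW n).aemeasurable) hδ hr0 hr1 hdec P
  exact ⟨exists_congr fun P => and_congr_right fun _ => (same_limits P).symm,
    fun P Q _ _ hP hQ => eq_of_tendstoInDistribution hP ((same_limits Q).1 hQ)⟩

/-- **Non-stationary Eagleson theorem** (Theorem 2.2, case `r ∈ B`): if `r` is a probability
density with respect to `μ` satisfying the decorrelation property, `Sₙ = ∑_{j<n} gⱼ∘X̄ⱼ`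
is integrable under `μ` and `r·|Sₙ|` is `μ`-integrable, and `bₙ → ∞`, then `Sₙ/bₙ` converges
in distribution under `μ` (to some probability measure) iff it converges in distribution
under `ν = r dμ`, and the limits coincide. -/
theorem eagleson_nonstationary
    {E : Type*} [MeasurableSpace E] (μ : Measure E) [IsProbabilityMeasure μ]
    {𝒳 : ℕ → Type*} [∀ i, MeasurableSpace (𝒳 i)]
    (X : ∀ i, E → 𝒳 i) (hX : ∀ i, Measurable (X i))
    (δ : ℕ → ℝ) (hδ0 : ∀ n, 0 ≤ δ n) (hδ : Tendsto δ atTop (𝓝 0))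
    (r : E → ℝ) (hrmeas : Measurable r) (hr0 : ∀ x, 0 ≤ r x) (hr1 : ∫ x, r x ∂μ = 1)
    (K : ℝ) (hK : 0 ≤ K) (hdec : Decorrelates μ X r K δ)
    {d : ℕ} (g : ∀ j, (∀ i, 𝒳 (j + i)) → EuclideanSpace ℝ (Fin d))
    (hg : ∀ j, Measurable (g j))
    (S : ℕ → E → EuclideanSpace ℝ (Fin d))
    (hS : ∀ n x, S n x = ∑ j ∈ Finset.range n, g j (Xbar X j x))
    (hSint : ∀ n, Integrable (S n) μ)
    (hSrint : ∀ n, Integrable (fun x => r x * ‖S n x‖) μ)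
    (b : ℕ → ℝ) (hb0 : ∀ n, 0 < b n) (hb : Tendsto b atTop atTop)
    (ν : Measure E) (hν : ν = μ.withDensity (fun x => ENNReal.ofReal (r x))) :
    ((∃ P : Measure (EuclideanSpace ℝ (Fin d)), IsProbabilityMeasure P ∧
        TendstoInDistribution μ (fun n x => (b n)⁻¹ • S n x) P) ↔
      (∃ P : Measure (EuclideanSpace ℝ (Fin d)), IsProbabilityMeasure P ∧
        TendstoInDistribution ν (fun n x => (b n)⁻¹ • S n x) P)) ∧
    (∀ P Q : Measure (EuclideanSpace ℝ (Fin d)),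
      IsProbabilityMeasure P → IsProbabilityMeasure Q →
      TendstoInDistribution μ (fun n x => (b n)⁻¹ • S n x) P →
      TendstoInDistribution ν (fun n x => (b n)⁻¹ • S n x) Q → P = Q) :=
  eagleson_nonstationary_general μ X hX δ hδ r (ae_of_all _ hr0) hr1 K hdec g hg S hS b hb ν hν
end

section
/- There exists an absolute constant c > 0 with the following property. Let X and Y be real-valued random variables with characteristic functions φ_X and φ_Y, and let Z be a real-valued random variable whose law is absolutely continuous with respect to Lebesgue measure with a bounded density f_Z. Then for every T > 0, d_K(X,Y) ≤ 4c·d_K(Y,Z) + ∫_{−T}^{T} | (φ_X(t) − φ_Y(t)) / t | dt + 2‖f_Z‖_∞ c² / T, where d_K(U,V) = sup_{t∈ℝ} |P(U ≤ t) − P(V ≤ t)| is the Kolmogorov distance and ‖f_Z‖_∞ = sup f_Z. -/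
open MeasureTheory Filter Topology Complex
open scoped ENNReal

/-- The characteristic function of a law `μ` on `ℝ`: `φ_μ(t) = ∫ e^{itx} dμ(x)`. -/
noncomputable def charFn (μ : Measure ℝ) (t : ℝ) : ℂ :=
  ∫ x, Complex.exp ((t * x : ℝ) * Complex.I) ∂μ

/-- The Kolmogorov (uniform) distance between two laws on `ℝ`:
`d_K(μ,ν) = sup_t |μ(-∞,t] − ν(-∞,t]|`. -/
noncomputable def kolDist (μ ν : Measure ℝ) : ℝ :=
  ⨆ t : ℝ, |(μ (Set.Iic t)).toReal - (ν (Set.Iic t)).toReal|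

/-! The Fejér measure `κ` has the density `(1 - cos (T v)) / (T v²)`, whose Fourier transform is a
triangle supported on `[-T, T]`. Inverting the Fourier transforms of `κ ∗ μ` and `κ ∗ ν` and using
`|∫ s in a..b, exp (-i t s)| ≤ 2 / |t|` bounds the Kolmogorov distance of the smoothed laws by the
integral of `|(φ_μ - φ_ν) / t|` over `[-T, T]`.

The smoothing is undone by monotonicity. The distribution function of `μ` is monotone, and that of
`ν` grows over an interval of length `2 a` by at most `E = 2 d_K(ν, Z) + 2 a ‖f_Z‖`, so a large
difference of the two persists, up to `E`, on an interval of that length. For `a = 16 / T` the mass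
of `κ` on `[-a, a]` is at least `4 / π`, hence exceeds the mass at most `4 / (T a)` outside by more
than `1`, so the unknown contribution of the outside can be absorbed into the left side.
-/

open Set
open scoped Real

section Kolmogorov

variable (μ ν : Measure ℝ)

lemma kolDist_comm : kolDist μ ν = kolDist ν μ := by
  simp only [kolDist, abs_sub_comm]

lemma kolDist_nonneg : 0 ≤ kolDist μ ν :=
  Real.iSup_nonneg fun _ ↦ abs_nonneg _

lemma ofReal_kolDist_le {J : ℝ≥0∞}
    (h : ∀ x, ENNReal.ofReal |μ.real (Iic x) - ν.real (Iic x)| ≤ J) :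
    ENNReal.ofReal (kolDist μ ν) ≤ J := by
  obtain rfl | hJ := eq_or_ne J ∞
  · exact le_top
  · rw [ENNReal.ofReal_le_iff_le_toReal hJ]
    exact ciSup_le fun x ↦ (ENNReal.ofReal_le_iff_le_toReal hJ).1 (h x)

lemma measureReal_Ioc_eq_sub [IsFiniteMeasure μ] {p q : ℝ} (hpq : p ≤ q) :
    μ.real (Ioc p q) = μ.real (Iic q) - μ.real (Iic p) := by
  rw [← measureReal_sdiff (Iic_subset_Iic.2 hpq) measurableSet_Iic, Iic_sdiff_Iic]

variable [IsFiniteMeasure μ] [IsFiniteMeasure ν]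

lemma abs_measureReal_Iic_sub_le_kolDist (x : ℝ) :
    |μ.real (Iic x) - ν.real (Iic x)| ≤ kolDist μ ν := by
  refine le_ciSup (f := fun x ↦ |μ.real (Iic x) - ν.real (Iic x)|)
    ⟨μ.real univ + ν.real univ, ?_⟩ x
  rintro _ ⟨y, rfl⟩
  refine (abs_sub _ _).trans ?_
  rw [abs_of_nonneg measureReal_nonneg, abs_of_nonneg measureReal_nonneg]
  exact add_le_add (measureReal_mono (subset_univ _)) (measureReal_mono (subset_univ _))

lemma measureReal_Ioc_le_add_two_mul_kolDist {p q : ℝ} (hpq : p ≤ q) :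
    μ.real (Ioc p q) ≤ 2 * kolDist μ ν + ν.real (Ioc p q) := by
  rw [measureReal_Ioc_eq_sub μ hpq, measureReal_Ioc_eq_sub ν hpq]
  linarith [abs_le.1 (abs_measureReal_Iic_sub_le_kolDist μ ν p),
    abs_le.1 (abs_measureReal_Iic_sub_le_kolDist μ ν q)]

end Kolmogorov

section Smoothing

lemma measureReal_conv {M : Type*} [AddMonoid M] [MeasurableSpace M] [MeasurableAdd₂ M]
    (μ ν : Measure M) [IsFiniteMeasure μ] [IsFiniteMeasure ν] {s : Set M} (hs : MeasurableSet s) :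
    (μ ∗ ν).real s = ∫ x, ν.real ((x + ·) ⁻¹' s) ∂μ := by
  rw [← integral_indicator_one hs, integral_conv ((integrable_const 1).indicator hs)]
  congr with x
  rw [← integral_indicator_one (hs.preimage (measurable_const_add x))]
  rfl

lemma integrable_measureReal_Iic_sub (κ μ : Measure ℝ) [IsFiniteMeasure κ] [IsFiniteMeasure μ]
    (x : ℝ) : Integrable (fun v ↦ μ.real (Iic (x - v))) κ := by
  have h_anti : Antitone fun v ↦ μ.real (Iic (x - v)) := fun v w hvw ↦
    measureReal_mono (Iic_subset_Iic.2 (sub_le_sub_left hvw x))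
  refine .of_bound h_anti.measurable.aestronglyMeasurable (μ.real univ) (.of_forall fun v ↦ ?_)
  rw [Real.norm_of_nonneg measureReal_nonneg]
  exact measureReal_mono (subset_univ _)

lemma mul_measureReal_sub_le_integral {α : Type*} [MeasurableSpace α] {κ : Measure α}
    [IsFiniteMeasure κ] {f : α → ℝ} (hf : Integrable f κ) {s : Set α} (hs : MeasurableSet s)
    {l η : ℝ} (hl : ∀ v ∈ s, l ≤ f v) (hη : ∀ v ∈ sᶜ, -η ≤ f v) :
    l * κ.real s - η * κ.real sᶜ ≤ ∫ v, f v ∂κ := by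
  rw [← integral_add_compl hs hf, sub_eq_add_neg, ← neg_mul]
  exact add_le_add
    (setIntegral_ge_of_const_le_real hs (measure_ne_top _ _) hl hf.integrableOn)
    (setIntegral_ge_of_const_le_real hs.compl (measure_ne_top _ _) hη hf.integrableOn)

variable (κ μ ν : Measure ℝ) [IsFiniteMeasure κ] [IsFiniteMeasure μ] [IsFiniteMeasure ν]

lemma measureReal_conv_Iic (x : ℝ) : (κ ∗ μ).real (Iic x) = ∫ v, μ.real (Iic (x - v)) ∂κ := by
  simp [measureReal_conv κ μ measurableSet_Iic]

lemma mul_measureReal_sub_le_kolDist_conv {s : Set ℝ} (hs : MeasurableSet s) {l x : ℝ}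
    (hl : ∀ v ∈ s, l ≤ μ.real (Iic (x - v)) - ν.real (Iic (x - v))) :
    l * κ.real s - kolDist μ ν * κ.real sᶜ ≤ kolDist (κ ∗ μ) (κ ∗ ν) := by
  have hμ := integrable_measureReal_Iic_sub κ μ x
  have hν := integrable_measureReal_Iic_sub κ ν x
  calc
    _ ≤ ∫ v, μ.real (Iic (x - v)) - ν.real (Iic (x - v)) ∂κ :=
      mul_measureReal_sub_le_integral (hμ.sub hν) hs hl fun v _ ↦
        (abs_le.1 (abs_measureReal_Iic_sub_le_kolDist μ ν (x - v))).1
    _ = (κ ∗ μ).real (Iic x) - (κ ∗ ν).real (Iic x) := by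
      rw [measureReal_conv_Iic, measureReal_conv_Iic, integral_sub hμ hν]
    _ ≤ kolDist (κ ∗ μ) (κ ∗ ν) :=
      (abs_le.1 (abs_measureReal_Iic_sub_le_kolDist (κ ∗ μ) (κ ∗ ν) x)).2

variable {ν}

-- If `F - G` is large at `x`, it stays large on `[x, x + 2a]`, because `F` is monotone and `G`
-- grows by at most `E`; if it is very negative at `x`, it stays so on `[x - 2a, x]`.
lemma kolDist_mul_sub_le_kolDist_conv {a E : ℝ} (hν : ∀ p, ν.real (Ioc p (p + 2 * a)) ≤ E) :
    kolDist μ ν * (κ.real (Icc (-a) a) - κ.real (Icc (-a) a)ᶜ) ≤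
      kolDist (κ ∗ μ) (κ ∗ ν) + E * κ.real (Icc (-a) a) := by
  set m := κ.real (Icc (-a) a)
  set m' := κ.real (Icc (-a) a)ᶜ
  have hν_growth {p q : ℝ} (hpq : p ≤ q) (hqp : q ≤ p + 2 * a) :
      ν.real (Iic q) ≤ ν.real (Iic p) + E := by
    have : ν.real (Ioc p q) ≤ ν.real (Ioc p (p + 2 * a)) :=
      measureReal_mono (Ioc_subset_Ioc_right hqp)
    linarith [measureReal_Ioc_eq_sub ν hpq, hν p]
  have h_pointwise (x : ℝ) : |μ.real (Iic x) - ν.real (Iic x)| * m ≤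
      kolDist (κ ∗ μ) (κ ∗ ν) + E * m + kolDist μ ν * m' := by
    rcases abs_choice (μ.real (Iic x) - ν.real (Iic x)) with h_abs | h_abs
    · have := mul_measureReal_sub_le_kolDist_conv κ μ ν (measurableSet_Icc (a := -a) (b := a))
        (l := μ.real (Iic x) - ν.real (Iic x) - E) (x := x + a) fun v hv ↦ by
          have hxv : x ≤ x + a - v := by linarith [hv.2]
          have hμ : μ.real (Iic x) ≤ μ.real (Iic (x + a - v)) :=
            measureReal_mono (Iic_subset_Iic.2 hxv)
          linarith [hν_growth hxv (by linarith [hv.1])]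
      rw [h_abs]
      linarith
    · have := mul_measureReal_sub_le_kolDist_conv κ ν μ (measurableSet_Icc (a := -a) (b := a))
        (l := ν.real (Iic x) - μ.real (Iic x) - E) (x := x - a) fun v hv ↦ by
          have hvx : x - a - v ≤ x := by linarith [hv.1]
          have hμ : μ.real (Iic (x - a - v)) ≤ μ.real (Iic x) :=
            measureReal_mono (Iic_subset_Iic.2 hvx)
          linarith [hν_growth hvx (by linarith [hv.2])]
      rw [kolDist_comm ν μ, kolDist_comm (κ ∗ ν)] at this
      rw [h_abs]
      linarith
  have h_sup : kolDist μ ν * m ≤ kolDist (κ ∗ μ) (κ ∗ ν) + E * m + kolDist μ ν * m' := by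
    conv_lhs => rw [kolDist, Real.iSup_mul_of_nonneg measureReal_nonneg]
    exact ciSup_le h_pointwise
  linarith

end Smoothing

section Inversion

lemma charFn_eq_charFun (μ : Measure ℝ) : charFn μ = charFun μ := by
  ext t
  simp [charFn, charFun_apply_real]

/-- The Fourier transform of the indicator of the interval from `a` to `b`; integrated against a
characteristic function it recovers the mass of that interval. -/
noncomputable def intervalFourier (a b t : ℝ) : ℂ :=
  ∫ s in a..b, cexp ((-(t * s) : ℝ) * I)

lemma continuous_intervalFourier (a b : ℝ) : Continuous (intervalFourier a b) := by
  unfold intervalFourier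
  exact intervalIntegral.continuous_parametric_intervalIntegral_of_continuous' (by fun_prop) a b

lemma norm_intervalFourier_le_abs_sub (a b t : ℝ) : ‖intervalFourier a b t‖ ≤ |b - a| :=
  (intervalIntegral.norm_integral_le_of_norm_le_const fun _ _ ↦
    (norm_exp_ofReal_mul_I _).le).trans_eq (one_mul _)

lemma norm_intervalFourier_le_two_div (a b : ℝ) {t : ℝ} (ht : t ≠ 0) :
    ‖intervalFourier a b t‖ ≤ 2 / |t| := by
  have h_eq : intervalFourier a b t =
      (cexp ((-(t * b) : ℝ) * I) - cexp ((-(t * a) : ℝ) * I)) / (-t * I) := by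
    unfold intervalFourier
    convert integral_exp_mul_complex (a := a) (b := b) (c := -t * I) (by simp [ht]) using 3 <;>
      push_cast <;> ring_nf
  rw [h_eq, norm_div]
  have h_num := norm_sub_le (cexp ((-(t * b) : ℝ) * I)) (cexp ((-(t * a) : ℝ) * I))
  rw [norm_exp_ofReal_mul_I, norm_exp_ofReal_mul_I, one_add_one_eq_two] at h_num
  simpa using div_le_div_of_nonneg_right h_num (abs_nonneg t)

lemma intervalFourier_sub_const (a b u t : ℝ) :
    intervalFourier (a - u) (b - u) t = cexp ((t * u : ℝ) * I) * intervalFourier a b t := by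
  unfold intervalFourier
  rw [← intervalIntegral.integral_comp_sub_right, ← intervalIntegral.integral_const_mul]
  congr with s
  rw [← Complex.exp_add]
  congr 1
  push_cast
  ring

/-- Fourier inversion for `ρ`, integrated over intervals: `ρ` has the density
`s ↦ ∫ g(t) e^{-its} dt`. When `φ_ρ` is integrable, `g = φ_ρ / 2π`. -/
structure HasFourierInversion (ρ : Measure ℝ) (g : ℝ → ℂ) : Prop where
  integrable : Integrable g
  measureReal_Ioc : ∀ ⦃a b⦄, a ≤ b → (ρ.real (Ioc a b) : ℂ) = ∫ t, g t * intervalFourier a b t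

variable {κ ρ σ : Measure ℝ} {g h : ℝ → ℂ}

lemma HasFourierInversion.integrable_mul_intervalFourier (hρ : HasFourierInversion ρ g)
    (a b : ℝ) : Integrable fun t ↦ g t * intervalFourier a b t :=
  hρ.integrable.mul_bdd (continuous_intervalFourier a b).aestronglyMeasurable
    (.of_forall (norm_intervalFourier_le_abs_sub a b))

lemma integrable_prod_mul_of_norm_le_one {α β : Type*} [MeasurableSpace α] [MeasurableSpace β]
    {μ : Measure α} [IsFiniteMeasure μ] {ν : Measure β} [SFinite ν] {f : β → ℂ}
    (hf : Integrable f ν) {e : α × β → ℂ} (he : AEStronglyMeasurable e (μ.prod ν))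
    (he_norm : ∀ p, ‖e p‖ ≤ 1) : Integrable (fun p : α × β ↦ f p.2 * e p) (μ.prod ν) :=
  (hf.comp_snd μ).mul_bdd he (.of_forall he_norm)

lemma measureReal_withDensity_ofReal {α : Type*} [MeasurableSpace α] {μ : Measure α} {k : α → ℝ}
    (hk : Integrable k μ) (hk_nonneg : 0 ≤ k) {s : Set α} (hs : MeasurableSet s) :
    (μ.withDensity fun x ↦ ENNReal.ofReal (k x)).real s = ∫ x in s, k x ∂μ := by
  rw [measureReal_def, withDensity_apply _ hs, integral_eq_lintegral_of_nonneg_ae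
    (.of_forall hk_nonneg) hk.integrableOn.aestronglyMeasurable]

lemma hasFourierInversion_withDensity {k : ℝ → ℝ} (hk : Integrable k) (hk_nonneg : 0 ≤ k)
    (hg : Integrable g) (hkg : ∀ᵐ s, (k s : ℂ) = ∫ t, g t * cexp ((-(t * s) : ℝ) * I)) :
    HasFourierInversion (volume.withDensity fun x ↦ ENNReal.ofReal (k x)) g where
  integrable := hg
  measureReal_Ioc a b hab := by
    have : IsFiniteMeasure (volume.restrict (uIoc a b)) := ⟨by simp [uIoc]⟩
    have h_int : Integrable (Function.uncurry fun s t ↦ g t * cexp ((-(t * s) : ℝ) * I))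
        ((volume.restrict (uIoc a b)).prod volume) :=
      integrable_prod_mul_of_norm_le_one hg
        (e := fun p ↦ cexp ((-(p.2 * p.1) : ℝ) * I))
        (by fun_prop : Continuous _).aestronglyMeasurable fun _ ↦ (norm_exp_ofReal_mul_I _).le
    calc
      _ = ∫ s in a..b, (k s : ℂ) := by
        rw [measureReal_withDensity_ofReal hk hk_nonneg measurableSet_Ioc,
          ← intervalIntegral.integral_of_le hab, intervalIntegral.integral_ofReal]
      _ = ∫ s in a..b, ∫ t, g t * cexp ((-(t * s) : ℝ) * I) :=
        intervalIntegral.integral_congr_ae (hkg.mono fun s hs _ ↦ hs)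
      _ = ∫ t, g t * intervalFourier a b t := by
        simp only [intervalIntegral_integral_swap h_int, intervalIntegral.integral_const_mul,
          intervalFourier]

lemma HasFourierInversion.conv [IsFiniteMeasure κ] (hκ : HasFourierInversion κ g)
    (μ : Measure ℝ) [IsFiniteMeasure μ] :
    HasFourierInversion (κ ∗ μ) fun t ↦ g t * charFn μ t where
  integrable := by
    rw [charFn_eq_charFun]
    exact hκ.integrable.mul_bdd measurable_charFun.aestronglyMeasurable
      (.of_forall fun t ↦ norm_charFun_le t)
  measureReal_Ioc a b hab := by
    have h_int : Integrable (Function.uncurry fun u t ↦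
        g t * intervalFourier a b t * cexp ((t * u : ℝ) * I)) (μ.prod volume) :=
      integrable_prod_mul_of_norm_le_one (hκ.integrable_mul_intervalFourier a b)
        (e := fun p ↦ cexp ((p.2 * p.1 : ℝ) * I))
        (by fun_prop : Continuous _).aestronglyMeasurable fun _ ↦ (norm_exp_ofReal_mul_I _).le
    calc
      _ = ∫ u, (κ.real (Ioc (a - u) (b - u)) : ℂ) ∂μ := by
        rw [Measure.conv_comm, measureReal_conv μ κ measurableSet_Ioc, ← integral_complex_ofReal]
        simp only [preimage_const_add_Ioc]
      _ = ∫ u, (∫ t, g t * intervalFourier a b t * cexp ((t * u : ℝ) * I)) ∂μ := by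
        congr with u
        rw [hκ.measureReal_Ioc (sub_le_sub_right hab u)]
        simp only [intervalFourier_sub_const, mul_assoc, mul_comm (cexp _)]
      _ = ∫ t, g t * charFn μ t * intervalFourier a b t := by
        rw [integral_integral_swap h_int]
        congr with t
        rw [integral_const_mul, mul_right_comm]
        rfl

lemma HasFourierInversion.ofReal_abs_sub_Ioc_le (hρ : HasFourierInversion ρ g)
    (hσ : HasFourierInversion σ h) {a b : ℝ} (hab : a ≤ b) :
    ENNReal.ofReal |ρ.real (Ioc a b) - σ.real (Ioc a b)| ≤
      ∫⁻ t, ‖2 * (g t - h t) / (t : ℂ)‖ₑ := by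
  have h_eq : ((ρ.real (Ioc a b) - σ.real (Ioc a b) : ℝ) : ℂ) =
      ∫ t, (g t - h t) * intervalFourier a b t := by
    rw [ofReal_sub, hρ.measureReal_Ioc hab, hσ.measureReal_Ioc hab, ← integral_sub
      (hρ.integrable_mul_intervalFourier a b) (hσ.integrable_mul_intervalFourier a b)]
    simp only [sub_mul]
  rw [← Real.norm_eq_abs, ← norm_real, h_eq, ofReal_norm]
  refine (enorm_integral_le_lintegral_enorm _).trans (lintegral_mono_ae ?_)
  filter_upwards [Measure.ae_ne volume (0 : ℝ)] with t ht
  rw [enorm_le_iff_norm_le, norm_mul, norm_div, norm_mul, norm_real, Real.norm_eq_abs, norm_ofNat,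
    mul_div_right_comm, mul_comm]
  gcongr
  exact norm_intervalFourier_le_two_div a b ht

lemma HasFourierInversion.ofReal_kolDist_le [IsFiniteMeasure ρ] [IsFiniteMeasure σ]
    (hρ : HasFourierInversion ρ g) (hσ : HasFourierInversion σ h) :
    ENNReal.ofReal (kolDist ρ σ) ≤ ∫⁻ t, ‖2 * (g t - h t) / (t : ℂ)‖ₑ := by
  refine _root_.ofReal_kolDist_le ρ σ fun x ↦ ?_
  have h_tendsto (τ : Measure ℝ) [IsFiniteMeasure τ] :
      Tendsto (fun a ↦ τ.real (Ioc a x)) atBot (𝓝 (τ.real (Iic x))) :=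
    (ENNReal.tendsto_toReal (measure_ne_top _ _)).comp (tendsto_measure_Ioc_atBot τ x)
  refine le_of_tendsto (ENNReal.tendsto_ofReal ((h_tendsto ρ).sub (h_tendsto σ)).abs) ?_
  filter_upwards [eventually_le_atBot x] with a hax using hρ.ofReal_abs_sub_Ioc_le hσ hax

end Inversion

section Fejer

/-- The Fejér kernel `(1 - cos (T v)) / (T v²)`, the smoothing density, of total mass `π`, written
so that it takes its limit value `T / 2` at `v = 0`. -/
noncomputable def fejerKernel (T v : ℝ) : ℝ := T / 2 * Real.sinc (T * v / 2) ^ 2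

/-- The triangle function supported on `[-T, T]` with peak `1 / 2`, whose Fourier transform is the
Fejér kernel. -/
noncomputable def fejerWeight (T t : ℝ) : ℝ := max 0 (1 - |t| / T) / 2

/-- The measure with the Fejér kernel as density, used to smooth distribution functions. -/
noncomputable def fejerMeasure (T : ℝ) : Measure ℝ :=
  volume.withDensity fun v ↦ ENNReal.ofReal (fejerKernel T v)

lemma fejerKernel_of_ne_zero (T : ℝ) {v : ℝ} (hv : v ≠ 0) :
    fejerKernel T v = (1 - Real.cos (T * v)) / (T * v ^ 2) := by
  obtain rfl | hT := eq_or_ne T 0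
  · simp [fejerKernel]
  rw [fejerKernel, Real.sinc_of_ne_zero (by positivity), div_pow, Real.sin_sq_eq_half_sub,
    mul_div_cancel₀ _ two_ne_zero]
  field_simp

lemma fejerKernel_neg (T v : ℝ) : fejerKernel T (-v) = fejerKernel T v := by
  simp [fejerKernel, neg_div]

lemma continuous_fejerKernel (T : ℝ) : Continuous (fejerKernel T) := by
  unfold fejerKernel
  fun_prop

variable {T : ℝ}

lemma fejerKernel_nonneg (hT : 0 ≤ T) : 0 ≤ fejerKernel T := fun v ↦ by
  unfold fejerKernel
  positivity

lemma fejerKernel_le_half (hT : 0 ≤ T) (v : ℝ) : fejerKernel T v ≤ T / 2 :=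
  mul_le_of_le_one_right (by positivity) ((sq_le_one_iff_abs_le_one _).2 (Real.abs_sinc_le_one _))

lemma fejerKernel_mul_sq_le (hT : 0 < T) (v : ℝ) : fejerKernel T v * v ^ 2 ≤ 2 / T := by
  obtain rfl | hv := eq_or_ne v 0
  · rw [zero_pow two_ne_zero, mul_zero]
    positivity
  rw [fejerKernel_of_ne_zero T hv]
  field_simp
  linarith [Real.neg_one_le_cos (T * v)]

lemma le_fejerKernel (hT : 0 < T) {v : ℝ} (hv : v ≠ 0) (hvT : |v| ≤ π / T) :
    2 * T / π ^ 2 ≤ fejerKernel T v := by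
  have hTv : |T * v| ≤ π := by rwa [abs_mul, abs_of_pos hT, mul_comm, ← le_div_iff₀ hT]
  rw [fejerKernel_of_ne_zero T hv, le_div_iff₀ (by positivity)]
  calc
    2 * T / π ^ 2 * (T * v ^ 2) = 2 / π ^ 2 * (T * v) ^ 2 := by ring
    _ ≤ 1 - Real.cos (T * v) := by linarith [Real.cos_le_one_sub_mul_cos_sq hTv]

lemma integrable_fejerKernel (hT : 0 < T) : Integrable (fejerKernel T) := by
  refine (integrable_inv_one_add_sq.const_mul (T / 2 + 2 / T)).mono'
    (continuous_fejerKernel T).aestronglyMeasurable (.of_forall fun v ↦ ?_)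
  rw [Real.norm_of_nonneg (fejerKernel_nonneg hT.le v), ← div_eq_mul_inv,
    le_div_iff₀ (by positivity)]
  linarith [fejerKernel_le_half hT.le v, fejerKernel_mul_sq_le hT v]

lemma isFiniteMeasure_fejerMeasure (hT : 0 < T) : IsFiniteMeasure (fejerMeasure T) :=
  isFiniteMeasure_withDensity_ofReal (integrable_fejerKernel hT).2

lemma measureReal_fejerMeasure (hT : 0 < T) {s : Set ℝ} (hs : MeasurableSet s) :
    (fejerMeasure T).real s = ∫ v in s, fejerKernel T v :=
  measureReal_withDensity_ofReal (integrable_fejerKernel hT) (fejerKernel_nonneg hT.le) hs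

lemma fejerMeasure_Icc_le (hT : 0 < T) {a : ℝ} (ha : 0 ≤ a) :
    (fejerMeasure T).real (Icc (-a) a) ≤ T * a := by
  calc
    _ = ∫ v in Icc (-a) a, fejerKernel T v := measureReal_fejerMeasure hT measurableSet_Icc
    _ ≤ ∫ _ in Icc (-a) a, T / 2 := by
      refine setIntegral_mono (integrable_fejerKernel hT).integrableOn (by simp) fun v ↦ ?_
      exact fejerKernel_le_half hT.le v
    _ = T * a := by
      rw [setIntegral_const, Real.volume_real_Icc_of_le (by linarith), smul_eq_mul]
      ring

lemma le_fejerMeasure_Icc (hT : 0 < T) {a : ℝ} (ha : π / T ≤ a) :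
    4 / π ≤ (fejerMeasure T).real (Icc (-a) a) := by
  have := isFiniteMeasure_fejerMeasure hT
  have h_pos : 0 < π / T := by positivity
  calc
    4 / π = ∫ _ in Icc (-(π / T)) (π / T), 2 * T / π ^ 2 := by
      rw [setIntegral_const, Real.volume_real_Icc_of_le (by linarith), smul_eq_mul]
      field
    _ ≤ ∫ v in Icc (-(π / T)) (π / T), fejerKernel T v := by
      refine setIntegral_mono_on_ae (by simp) (integrable_fejerKernel hT).integrableOn
        measurableSet_Icc ?_
      filter_upwards [Measure.ae_ne volume (0 : ℝ)] with v hv hv_mem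
      exact le_fejerKernel hT hv (abs_le.2 hv_mem)
    _ = (fejerMeasure T).real (Icc (-(π / T)) (π / T)) :=
      (measureReal_fejerMeasure hT measurableSet_Icc).symm
    _ ≤ (fejerMeasure T).real (Icc (-a) a) :=
      measureReal_mono (Icc_subset_Icc (neg_le_neg ha) ha)

lemma setIntegral_Ioi_fejerKernel_le (hT : 0 < T) {a : ℝ} (ha : 0 < a) :
    ∫ v in Ioi a, fejerKernel T v ≤ 2 / (T * a) := by
  have h_int : IntegrableOn (fun v : ℝ ↦ 2 / T * v ^ (-2 : ℝ)) (Ioi a) :=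
    (integrableOn_Ioi_rpow_of_lt (by norm_num) ha).const_mul _
  calc
    _ ≤ ∫ v in Ioi a, 2 / T * v ^ (-2 : ℝ) := by
      refine setIntegral_mono_on (integrable_fejerKernel hT).integrableOn h_int
        measurableSet_Ioi fun v hv ↦ ?_
      have hv_pos : 0 < v := ha.trans hv
      rw [Real.rpow_neg hv_pos.le, Real.rpow_two, ← div_eq_mul_inv, le_div_iff₀ (by positivity)]
      exact fejerKernel_mul_sq_le hT v
    _ = 2 / (T * a) := by
      rw [integral_const_mul, integral_Ioi_rpow_of_lt (by norm_num) ha,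
        show (-2 : ℝ) + 1 = -1 by norm_num, Real.rpow_neg_one]
      field

lemma fejerMeasure_compl_Icc_le (hT : 0 < T) {a : ℝ} (ha : 0 < a) :
    (fejerMeasure T).real (Icc (-a) a)ᶜ ≤ 4 / (T * a) := by
  have := isFiniteMeasure_fejerMeasure hT
  have h_tail : (fejerMeasure T).real (Ioi a) ≤ 2 / (T * a) :=
    (measureReal_fejerMeasure hT measurableSet_Ioi).trans_le (setIntegral_Ioi_fejerKernel_le hT ha)
  have h_symm : (fejerMeasure T).real (Iio (-a)) = (fejerMeasure T).real (Ioi a) := by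
    rw [measureReal_fejerMeasure hT measurableSet_Iio,
      measureReal_fejerMeasure hT measurableSet_Ioi, ← integral_Iic_eq_integral_Iio,
      ← integral_comp_neg_Ioi]
    simp only [fejerKernel_neg]
  calc
    _ = (fejerMeasure T).real (Iio (-a) ∪ Ioi a) := by
      rw [← Ici_inter_Iic, compl_inter, compl_Ici, compl_Iic]
    _ ≤ (fejerMeasure T).real (Iio (-a)) + (fejerMeasure T).real (Ioi a) :=
      measureReal_union_le _ _
    _ ≤ 2 / (T * a) + 2 / (T * a) := by
      rw [h_symm]
      gcongr
    _ = 4 / (T * a) := by ring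

lemma one_le_fejerMeasure_Icc_sub_compl (hT : 0 < T) {a : ℝ} (ha : 16 / T ≤ a) :
    1 ≤ (fejerMeasure T).real (Icc (-a) a) - (fejerMeasure T).real (Icc (-a) a)ᶜ := by
  have ha_pos : 0 < a := (by positivity : 0 < 16 / T).trans_le ha
  have h_in : 4 / π ≤ (fejerMeasure T).real (Icc (-a) a) := by
    refine le_fejerMeasure_Icc hT (le_trans ?_ ha)
    gcongr
    linarith [Real.pi_lt_four]
  have h_out : (fejerMeasure T).real (Icc (-a) a)ᶜ ≤ 1 / 4 := by
    refine (fejerMeasure_compl_Icc_le hT ha_pos).trans ?_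
    rw [div_le_iff₀ (by positivity)]
    linarith [(div_le_iff₀' hT).1 ha]
  have h_pi : 5 / 4 ≤ 4 / π := by
    rw [le_div_iff₀ Real.pi_pos]
    linarith [Real.pi_lt_d2]
  linarith

lemma continuous_fejerWeight (T : ℝ) : Continuous (fejerWeight T) := by
  unfold fejerWeight
  fun_prop

lemma fejerWeight_of_abs_le (hT : 0 < T) {t : ℝ} (ht : |t| ≤ T) :
    fejerWeight T t = (1 - |t| / T) / 2 := by
  rw [fejerWeight, max_eq_right (sub_nonneg.2 ((div_le_one hT).2 ht))]

lemma fejerWeight_of_le_abs (hT : 0 < T) {t : ℝ} (ht : T ≤ |t|) : fejerWeight T t = 0 := by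
  rw [fejerWeight, max_eq_left (sub_nonpos.2 ((one_le_div hT).2 ht)), zero_div]

lemma fejerWeight_nonneg (T t : ℝ) : 0 ≤ fejerWeight T t := by
  unfold fejerWeight
  positivity

lemma two_mul_fejerWeight_le_indicator (hT : 0 < T) (t : ℝ) :
    2 * fejerWeight T t ≤ (Icc (-T) T).indicator 1 t := by
  by_cases ht : t ∈ Icc (-T) T
  · rw [indicator_of_mem ht, fejerWeight_of_abs_le hT (abs_le.2 ht), Pi.one_apply]
    linarith [div_nonneg (abs_nonneg t) hT.le]
  · rw [indicator_of_notMem ht, fejerWeight_of_le_abs hT (not_le.1 (mt abs_le.1 ht)).le, mul_zero]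

lemma integrable_fejerWeight (hT : 0 < T) : Integrable (fejerWeight T) := by
  refine (continuous_fejerWeight T).integrable_of_hasCompactSupport
    (.intro (isCompact_Icc (a := -T) (b := T)) fun t ht ↦ ?_)
  exact fejerWeight_of_le_abs hT (not_le.1 (mt abs_le.1 ht)).le

lemma intervalIntegral_one_sub_div_mul_cos (hT : T ≠ 0) {v : ℝ} (hv : v ≠ 0) :
    ∫ t in 0..T, (1 - t / T) * Real.cos (t * v) = (1 - Real.cos (T * v)) / (T * v ^ 2) := by
  rw [intervalIntegral.integral_eq_sub_of_hasDerivAt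
    (f := fun t ↦ (1 - t / T) * Real.sin (t * v) / v - Real.cos (t * v) / (T * v ^ 2))]
  · simp only [zero_div, sub_zero, zero_mul, mul_zero, Real.sin_zero, Real.cos_zero]
    field
  · intro t _
    have h_arg : HasDerivAt (fun t ↦ t * v) v t := hasDerivAt_mul_const v
    have h_weight : HasDerivAt (fun t ↦ 1 - t / T) (-(1 / T)) t :=
      ((hasDerivAt_id t).div_const T).const_sub 1
    refine (((h_weight.mul h_arg.sin).div_const v).sub
      (h_arg.cos.div_const (T * v ^ 2))).congr_deriv ?_
    field
  · exact (by fun_prop : Continuous _).intervalIntegrable _ _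

lemma integral_fejerWeight_mul_cos (hT : 0 < T) {v : ℝ} (hv : v ≠ 0) :
    ∫ t, fejerWeight T t * Real.cos (t * v) = fejerKernel T v := by
  have h_even (t : ℝ) :
      fejerWeight T t * Real.cos (t * v) = fejerWeight T |t| * Real.cos (|t| * v) := by
    rcases abs_choice t with h | h <;> simp [fejerWeight, h]
  calc
    _ = 2 * ∫ t in Ioi 0, fejerWeight T t * Real.cos (t * v) :=
      (integral_congr_ae (.of_forall h_even)).trans <|
        integral_comp_abs (f := fun t ↦ fejerWeight T t * Real.cos (t * v))
    _ = 2 * ∫ t in Ioc 0 T, fejerWeight T t * Real.cos (t * v) := by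
      congr 1
      refine setIntegral_eq_of_subset_of_forall_sdiff_eq_zero measurableSet_Ioi
        Ioc_subset_Ioi_self fun t ⟨ht_pos, ht⟩ ↦ ?_
      have htT : T ≤ |t| := (not_le.1 fun h ↦ ht ⟨ht_pos, h⟩).le.trans (le_abs_self t)
      rw [fejerWeight_of_le_abs hT htT, zero_mul]
    _ = ∫ t in Ioc 0 T, (1 - t / T) * Real.cos (t * v) := by
      rw [← integral_const_mul]
      refine setIntegral_congr_fun measurableSet_Ioc fun t ht ↦ ?_
      have ht_abs : |t| = t := abs_of_pos ht.1
      simp only [fejerWeight_of_abs_le hT (ht_abs.trans_le ht.2), ht_abs]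
      ring
    _ = fejerKernel T v := by
      rw [← intervalIntegral.integral_of_le hT.le, intervalIntegral_one_sub_div_mul_cos hT.ne' hv,
        fejerKernel_of_ne_zero T hv]

lemma integral_fejerWeight_mul_exp (hT : 0 < T) {v : ℝ} (hv : v ≠ 0) :
    ∫ t, (fejerWeight T t : ℂ) * cexp ((-(t * v) : ℝ) * I) = fejerKernel T v := by
  set f : ℝ → ℂ := fun t ↦ fejerWeight T t * cexp ((-(t * v) : ℝ) * I)
  have hf : Integrable f := (integrable_fejerWeight hT).ofReal.mul_bdd
    (by fun_prop : Continuous _).aestronglyMeasurable 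
    (.of_forall fun t ↦ (norm_exp_ofReal_mul_I _).le)
  have h_symm (t : ℝ) : f t + f (-t) = 2 * (fejerWeight T t * Real.cos (t * v) : ℝ) := by
    simp only [f, fejerWeight, abs_neg, ofReal_mul, ofReal_cos, Complex.cos]
    push_cast
    ring_nf
  have h_two : 2 * ∫ t, f t = 2 * (fejerKernel T v : ℂ) := by
    calc
      2 * ∫ t, f t = (∫ t, f t) + ∫ t, f (-t) := by rw [integral_neg_eq_self, two_mul]
      _ = ∫ t, 2 * ((fejerWeight T t * Real.cos (t * v) : ℝ) : ℂ) := by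
        rw [← integral_add hf hf.comp_neg]
        simp only [h_symm]
      _ = 2 * (fejerKernel T v : ℂ) := by
        rw [integral_const_mul, integral_complex_ofReal, integral_fejerWeight_mul_cos hT hv]
  exact mul_left_cancel₀ two_ne_zero h_two

lemma hasFourierInversion_fejerMeasure (hT : 0 < T) :
    HasFourierInversion (fejerMeasure T) fun t ↦ (fejerWeight T t : ℂ) :=
  hasFourierInversion_withDensity (integrable_fejerKernel hT) (fejerKernel_nonneg hT.le)
    (integrable_fejerWeight hT).ofReal <| by
      filter_upwards [Measure.ae_ne volume (0 : ℝ)] with v hv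
      exact (integral_fejerWeight_mul_exp hT hv).symm

lemma ofReal_kolDist_fejerMeasure_conv_le (hT : 0 < T) (μ ν : Measure ℝ) [IsFiniteMeasure μ]
    [IsFiniteMeasure ν] :
    ENNReal.ofReal (kolDist (fejerMeasure T ∗ μ) (fejerMeasure T ∗ ν)) ≤
      ∫⁻ t in Icc (-T) T, ‖(charFn μ t - charFn ν t) / (t : ℂ)‖ₑ := by
  have := isFiniteMeasure_fejerMeasure hT
  have hκ := hasFourierInversion_fejerMeasure hT
  refine ((hκ.conv μ).ofReal_kolDist_le (hκ.conv ν)).trans ?_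
  rw [← lintegral_indicator measurableSet_Icc]
  refine lintegral_mono fun t ↦ ?_
  have h_factor : 2 * (fejerWeight T t * charFn μ t - fejerWeight T t * charFn ν t) / (t : ℂ) =
      (2 * fejerWeight T t : ℝ) * ((charFn μ t - charFn ν t) / t) := by
    push_cast
    ring
  have h_weight := two_mul_fejerWeight_le_indicator hT t
  rw [h_factor, enorm_mul, ← ofReal_norm, norm_real,
    Real.norm_of_nonneg (mul_nonneg zero_le_two (fejerWeight_nonneg T t))]
  by_cases ht : t ∈ Icc (-T) T
  · rw [indicator_of_mem ht] at h_weight ⊢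
    exact mul_le_of_le_one_left' (ENNReal.ofReal_le_one.2 h_weight)
  · rw [indicator_of_notMem ht] at h_weight ⊢
    rw [ENNReal.ofReal_of_nonpos h_weight, zero_mul]

lemma kolDist_le_kolDist_fejerMeasure_conv_add (hT : 0 < T) (μ : Measure ℝ) {ν : Measure ℝ}
    [IsFiniteMeasure μ] [IsFiniteMeasure ν] {E : ℝ}
    (hν : ∀ p, ν.real (Ioc p (p + 2 * (16 / T))) ≤ E) :
    kolDist μ ν ≤ kolDist (fejerMeasure T ∗ μ) (fejerMeasure T ∗ ν) + E * 16 := by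
  have := isFiniteMeasure_fejerMeasure hT
  set κ := fejerMeasure T
  set a := 16 / T
  have hE : 0 ≤ E := measureReal_nonneg.trans (hν 0)
  calc
    kolDist μ ν ≤ kolDist μ ν * (κ.real (Icc (-a) a) - κ.real (Icc (-a) a)ᶜ) :=
      le_mul_of_one_le_right (kolDist_nonneg μ ν) (one_le_fejerMeasure_Icc_sub_compl hT le_rfl)
    _ ≤ kolDist (κ ∗ μ) (κ ∗ ν) + E * κ.real (Icc (-a) a) :=
      kolDist_mul_sub_le_kolDist_conv κ μ hν
    _ ≤ kolDist (κ ∗ μ) (κ ∗ ν) + E * 16 := by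
      gcongr
      exact (fejerMeasure_Icc_le hT (by positivity)).trans_eq (mul_div_cancel₀ _ hT.ne')

end Fejer

lemma measureReal_withDensity_Ioc_le {f : ℝ → ℝ} {B : ℝ} (hB : 0 ≤ B) (hf : ∀ x, f x ≤ B)
    {p q : ℝ} (hpq : p ≤ q) :
    (volume.withDensity fun x ↦ ENNReal.ofReal (f x)).real (Ioc p q) ≤ B * (q - p) := by
  refine ENNReal.toReal_le_of_le_ofReal (mul_nonneg hB (sub_nonneg.2 hpq)) ?_
  rw [withDensity_apply _ measurableSet_Ioc]
  calc
    _ ≤ ∫⁻ _ in Ioc p q, ENNReal.ofReal B :=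
      lintegral_mono fun x ↦ ENNReal.ofReal_le_ofReal (hf x)
    _ = ENNReal.ofReal (B * (q - p)) := by
      rw [setLIntegral_const, Real.volume_Ioc, ENNReal.ofReal_mul hB]

theorem esseen_type_inequality_general (μ ν : Measure ℝ) [IsFiniteMeasure μ] [IsFiniteMeasure ν]
    {ε B : ℝ} (hν : ∀ ⦃p q⦄, p ≤ q → ν.real (Ioc p q) ≤ ε + B * (q - p)) {T : ℝ} (hT : 0 < T) :
    ENNReal.ofReal (kolDist μ ν) ≤
      ENNReal.ofReal (16 * ε) +
        (∫⁻ t in Icc (-T) T, ‖(charFn μ t - charFn ν t) / (t : ℂ)‖ₑ) +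
        ENNReal.ofReal (2 * B * 16 ^ 2 / T) := by
  set d := kolDist (fejerMeasure T ∗ μ) (fejerMeasure T ∗ ν)
  have h_window (p : ℝ) : ν.real (Ioc p (p + 2 * (16 / T))) ≤ ε + B * (2 * (16 / T)) := by
    have hp : p ≤ p + 2 * (16 / T) := le_add_of_nonneg_right (by positivity)
    simpa only [add_sub_cancel_left] using hν hp
  have h_smooth : kolDist μ ν ≤ 16 * ε + d + 2 * B * 16 ^ 2 / T :=
    (kolDist_le_kolDist_fejerMeasure_conv_add hT μ h_window).trans_eq (by ring)
  calc
    _ ≤ ENNReal.ofReal (16 * ε + d) + ENNReal.ofReal (2 * B * 16 ^ 2 / T) :=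
      (ENNReal.ofReal_le_ofReal h_smooth).trans ENNReal.ofReal_add_le
    _ ≤ ENNReal.ofReal (16 * ε) + ENNReal.ofReal d + ENNReal.ofReal (2 * B * 16 ^ 2 / T) := by
      gcongr
      exact ENNReal.ofReal_add_le
    _ ≤ _ := by
      gcongr
      exact ofReal_kolDist_fejerMeasure_conv_le hT μ ν

/-- **Lemma 2.6, first inequality (Esseen-type smoothing inequality)**: there is an absolute
constant `c > 0` so that for any real random variables `X, Y` (given by their laws) and any
`Z` with a bounded Lebesgue density `f_Z`, for every `T > 0`,
`d_K(X,Y) ≤ 4c d_K(Y,Z) + ∫_{−T}^{T} |(φ_X(t) − φ_Y(t))/t| dt + 2‖f_Z‖_∞ c²/T`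
(the middle integral being a Lebesgue integral with values in `[0,∞]`). -/
theorem esseen_type_inequality :
    ∃ c : ℝ, 0 < c ∧
      ∀ (μX μY μZ : Measure ℝ), IsProbabilityMeasure μX → IsProbabilityMeasure μY →
      ∀ (fZ : ℝ → ℝ) (B : ℝ), Measurable fZ → (∀ x, 0 ≤ fZ x) → (∀ x, fZ x ≤ B) →
      μZ = MeasureTheory.volume.withDensity (fun x => ENNReal.ofReal (fZ x)) →
      IsProbabilityMeasure μZ →
      ∀ T : ℝ, 0 < T →
        ENNReal.ofReal (kolDist μX μY) ≤
          ENNReal.ofReal (4 * c * kolDist μY μZ) +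
            (∫⁻ t in Set.Icc (-T) T, (‖(charFn μX t - charFn μY t) / (t : ℂ)‖₊ : ℝ≥0∞)) +
            ENNReal.ofReal (2 * B * c ^ 2 / T) := by
  refine ⟨16, by norm_num, fun μX μY μZ _ _ fZ B _ hf_nonneg hf_le hμZ _ T hT ↦ ?_⟩
  have hB : 0 ≤ B := (hf_nonneg 0).trans (hf_le 0)
  have hY ⦃p q : ℝ⦄ (hpq : p ≤ q) : μY.real (Ioc p q) ≤ 2 * kolDist μY μZ + B * (q - p) :=
    (measureReal_Ioc_le_add_two_mul_kolDist μY μZ hpq).trans <|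
      add_le_add_right (hμZ ▸ measureReal_withDensity_Ioc_le hB hf_le hpq) _
  refine (esseen_type_inequality_general μX μY hY hT).trans ?_
  gcongr ENNReal.ofReal ?_ + _ + _
  linarith [kolDist_nonneg μY μZ]
end
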